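/- For any compact subset 𝒩 of the set of symmetric positive definite 3×3 real matrices, there exists a smooth vector field W : 𝒩 × 𝕋³ → ℝ³ (smooth jointly in both variables) such that, for every R ∈ 𝒩: (1) div_ξ W(R,ξ) = 0 for all ξ ∈ 𝕋³; (2) div_ξ (W(R,ξ) ⊗ W(R,ξ)) = 0 for all ξ ∈ 𝕋³; (3) the average of W(R,·) over 𝕋³ is zero; (4) the average of W(R,ξ) ⊗ W(R,ξ) over 𝕋³ equals R. -/

import Mathlib

/-!
The field is a superposition `W(R, ξ) = ∑ᵢ γᵢ(R) ψᵢ(ξ) dᵢ` of straight jets. The `dᵢ` are finitely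
many integer directions, each profile `ψᵢ` is smooth, periodic and constant along `dᵢ`, has zero
average and mean square one, and distinct profiles have disjoint supports. Constancy along `dᵢ` gives
`div W = 0`; disjointness gives `W ⊗ W = ∑ᵢ γᵢ² ψᵢ² dᵢ ⊗ dᵢ`, which is divergence-free for the same
reason (`sum_pd_sum_eq_zero`) and has average `∑ᵢ γᵢ² dᵢ ⊗ dᵢ`. Two facts remain.

* `global_decomp`: every `R ∈ 𝒩` equals `∑ᵢ γᵢ(R)² dᵢ ⊗ dᵢ` with `γᵢ` smooth near `𝒩`. A matrix
  near the identity is a positive combination of the squares of `e_i`, `e_i ± e_j`, with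
  coefficients affine in the matrix. A positive definite `R₀` is brought close to the identity by
  conjugating with a rational matrix, which gives such a decomposition near `R₀` with integer
  directions (`local_decomp`). Compactness and a partition of unity consisting of squares glue these.

* `exists_profiles`: for any finite family of integer directions there are such profiles. For
  every pair choose a nonzero integer vector `n i j` orthogonal to both directions, and let `ψᵢ` be a
  product of periodic bumps in `n i j · (ξ - cᵢ)`. If `n i j · (cⱼ - cᵢ) ∉ ℤ`, the supports for `i`
  and `j` are disjoint as soon as the bumps are narrow; centres `cᵢ` with this property exist because
  real numbers can be chosen algebraically generic (`exists_generic`). An extra odd factor yields zero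
  average (`integral_eq_zero_of_odd`).
-/

noncomputable section

open MeasureTheory Real Set

/-! Basic setup: we model the flat torus `𝕋³ = ℝ³/ℤ³` by working with `ℤ³`-periodic
functions on `ℝ³ = Fin 3 → ℝ`, with the unit cube as fundamental domain. -/

abbrev V3 : Type := Fin 3 → ℝ
abbrev M3 : Type := Fin 3 → Fin 3 → ℝ

/-- The unit cube, a fundamental domain for `𝕋³` (of volume `1`). -/
def cube : Set V3 := {x | ∀ i, x i ∈ Set.Icc (0:ℝ) 1}

/-- `ℤ³`-periodicity: functions on the torus `𝕋³`. -/
def Per {α : Type*} (f : V3 → α) : Prop :=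
  ∀ (x : V3) (n : Fin 3 → ℤ), f (x + fun i => (n i : ℝ)) = f x

/-- Partial derivative in the `i`-th coordinate direction. -/
def pd (f : V3 → ℝ) (i : Fin 3) (x : V3) : ℝ := fderiv ℝ f x (Pi.single i 1)

/-- Divergence of a vector field on `ℝ³`. -/
def divg (u : V3 → V3) (x : V3) : ℝ := ∑ i, pd (fun y => u y i) i x

section Norms
variable {E : Type*} [NormedAddCommGroup E] [NormedSpace ℝ E]

/-- The spatial `C^j` seminorm `[f]_j` (sup of the `j`-th derivative). -/
def semiJ (j : ℕ) (f : V3 → E) : ℝ := ⨆ x : V3, ‖iteratedFDeriv ℝ j f x‖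

/-- The spatial `C^N` norm `‖f‖_N`. -/
def normC (N : ℕ) (f : V3 → E) : ℝ := ∑ j ∈ Finset.range (N+1), semiJ j f

/-- The spatial Hölder seminorm `[f]_{N+α}` (for `α > 0`; at `x = y` the quotient is
junk `0/0 = 0`). -/
def semiH (N : ℕ) (α : ℝ) (f : V3 → E) : ℝ :=
  ⨆ x : V3, ⨆ y : V3, ‖iteratedFDeriv ℝ N f x - iteratedFDeriv ℝ N f y‖ / ‖x - y‖ ^ α

/-- The spatial Hölder norm `‖f‖_{N+α}`. -/
def normH (N : ℕ) (α : ℝ) (f : V3 → E) : ℝ := normC N f + semiH N α f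

/-- `‖f‖_N` for time dependent functions: sup over a time set `S` of spatial `C^N` norms. -/
def tN (S : Set ℝ) (N : ℕ) (f : ℝ → V3 → E) : ℝ := ⨆ t : S, normC N (f t.1)

/-- `‖f‖_{N+α}` for time dependent functions. -/
def tH (S : Set ℝ) (N : ℕ) (α : ℝ) (f : ℝ → V3 → E) : ℝ := ⨆ t : S, normH N α (f t.1)

/-- `[f]_N` for time dependent functions. -/
def tSemiJ (S : Set ℝ) (j : ℕ) (f : ℝ → V3 → E) : ℝ := ⨆ t : S, semiJ j (f t.1)

/-- `[f]_{N+α}` for time dependent functions. -/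
def tSemiH (S : Set ℝ) (N : ℕ) (α : ℝ) (f : ℝ → V3 → E) : ℝ := ⨆ t : S, semiH N α (f t.1)

-- The `C^α` norm `‖f‖_α` for `0 ≤ α ≤ 1` (just the sup norm if `α = 0`).
open Classical in
def cA (α : ℝ) (f : V3 → E) : ℝ := semiJ 0 f + (if α = 0 then 0 else semiH 0 α f)

-- The Hölder norm `‖f‖_r` for a real exponent `r = N + s`, `s ∈ [0,1)`.
open Classical in
def hNormR (r : ℝ) (f : V3 → E) : ℝ :=
  normC ⌊r⌋₊ f + (if r = (⌊r⌋₊ : ℝ) then 0 else semiH ⌊r⌋₊ (r - (⌊r⌋₊ : ℝ)) f)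

/-- Joint smoothness in space and time. -/
def SmoothST (f : ℝ → V3 → E) : Prop :=
  ContDiff ℝ (⊤:ℕ∞) (fun p : ℝ × V3 => f p.1 p.2)

end Norms

/-! Weak solutions of the incompressible Euler equations. -/

/-- `v` is a weak solution of the incompressible Euler equations on `𝕋³ × [0,T]`:
it is continuous, periodic, weakly divergence-free, and satisfies the Euler equations
tested against smooth, divergence-free, periodic test vector fields compactly
supported in time inside `(0,T)`. -/
structure WeakEuler (T : ℝ) (v : ℝ → V3 → V3) : Prop where
  cont : ContinuousOn (fun p : ℝ × V3 => v p.1 p.2) (Set.Icc 0 T ×ˢ Set.univ)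
  per : ∀ t, Per (v t)
  divfree : ∀ ψ : V3 → ℝ, ContDiff ℝ (⊤:ℕ∞) ψ → Per ψ → ∀ t ∈ Set.Icc (0:ℝ) T,
    ∫ x in cube, ∑ i, v t x i * pd ψ i x = 0
  weak : ∀ φ : ℝ → V3 → V3, SmoothST φ → (∀ t, Per (φ t)) →
    (∃ K : Set ℝ, IsCompact K ∧ K ⊆ Set.Ioo 0 T ∧ ∀ t ∉ K, ∀ x, φ t x = 0) →
    (∀ t x, divg (φ t) x = 0) →
    ∫ t in Set.Ioo (0:ℝ) T, ∫ x in cube,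
      ((∑ i, v t x i * deriv (fun s => φ s x i) t)
        + ∑ i, ∑ j, v t x i * v t x j * pd (fun y => φ t y i) j x) = 0

/-- The kinetic energy `e_v(t) = ½∫_{𝕋³} |v(x,t)|² dx`. -/
def energy (v : ℝ → V3 → V3) (t : ℝ) : ℝ := (1/2) * ∫ x in cube, ∑ i, (v t x i)^2

/-- `v` is a smooth (classical) solution of the incompressible Euler equations on
`𝕋³ × [0,T]`, with some smooth periodic pressure. -/
structure SmoothEuler (T : ℝ) (v : ℝ → V3 → V3) : Prop where
  smooth : SmoothST v
  per : ∀ t, Per (v t)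
  divfree : ∀ t x, divg (v t) x = 0
  momentum : ∃ p : ℝ → V3 → ℝ, SmoothST p ∧ (∀ t, Per (p t)) ∧
    ∀ t ∈ Set.Icc (0:ℝ) T, ∀ x k,
      deriv (fun s => v s x k) t + (∑ j, pd (fun y => v t y j * v t y k) j x)
        + pd (p t) k x = 0

/-! The Euler–Reynolds system. -/

/-- The smooth pair `(v,R)` solves the Euler–Reynolds system on `𝕋³ × [0,T]`:
`∂ₜv + div(v ⊗ v) + ∇p = div R`, `div v = 0`, where `p` is the (zero-average) pressure. -/
structure EulerReynolds (T : ℝ) (v : ℝ → V3 → V3) (R : ℝ → V3 → M3) : Prop where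
  smooth_v : SmoothST v
  smooth_R : SmoothST R
  per_v : ∀ t, Per (v t)
  per_R : ∀ t, Per (R t)
  symm_R : ∀ t x i j, R t x i j = R t x j i
  divfree : ∀ t x, divg (v t) x = 0
  momentum : ∃ p : ℝ → V3 → ℝ, SmoothST p ∧ (∀ t, Per (p t)) ∧
    (∀ t, ∫ x in cube, p t x = 0) ∧
    ∀ t ∈ Set.Icc (0:ℝ) T, ∀ x k,
      deriv (fun s => v s x k) t + (∑ j, pd (fun y => v t y j * v t y k) j x)
        + pd (p t) k x
      = ∑ j, pd (fun y => R t y j k) j x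

/-! Parameters of the convex integration scheme. -/

/-- Frequency parameter `λ_q = 2π⌈a^(b^q)⌉`. -/
def lam (a b : ℝ) (q : ℕ) : ℝ := 2 * Real.pi * (⌈a ^ (b ^ q)⌉ : ℝ)

/-- Amplitude parameter `δ_q = λ_q^(-2β)`. -/
def del (a b β : ℝ) (q : ℕ) : ℝ := lam a b q ^ (-(2*β))

/-- `θ_q = δ_{q-1}^{-1/2} λ_{q-1}^{-1-3α}` (for `q ≥ 1`). -/
def theta (a b β α : ℝ) (q : ℕ) : ℝ :=
  del a b β (q-1) ^ (-(1/2 : ℝ)) * lam a b (q-1) ^ (-(1+3*α))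

/-- `τ_q = λ_{q-1}^{-γ} θ_q` for `q ≥ 1`, and `τ_0 = T/15`. -/
def tau (T a b β α γ : ℝ) (q : ℕ) : ℝ :=
  if q = 0 then T/15 else lam a b (q-1) ^ (-γ) * theta a b β α q

/-- Mollification parameter `ℓ_q = δ_{q+1}^{1/2} δ_q^{-1/2} λ_q^{-1-γ/2-3α/2}`. -/
def ell (a b β α γ : ℝ) (q : ℕ) : ℝ :=
  del a b β (q+1) ^ ((1:ℝ)/2) * del a b β q ^ (-(1/2 : ℝ)) * lam a b q ^ (-(1 + γ/2 + 3*α/2))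

/-! Good and bad sets of times. -/

/-- The good set `𝒢 = [0,T] ∖ ℬ`. -/
def goodSet (T : ℝ) (B : Set ℝ) : Set ℝ := Set.Icc 0 T \ B

/-- The "real" bad set `𝓑̂ = {t ∈ [0,T] : dist(t,𝒢) > τ}`. -/
def farBad (T τ : ℝ) (B : Set ℝ) : Set ℝ :=
  {t ∈ Set.Icc (0:ℝ) T | τ < Metric.infDist t (goodSet T B)}

/-- The step-`q` properties (i), (iii), (vi), (vii) of the bad set `ℬ_q` and of the pair
`(v_q, R_q)`; `Cv N` are the universal constants in property (vii). -/
structure StepProps (T a b β α γ : ℝ) (Cv : ℕ → ℝ) (q : ℕ)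
    (v : ℝ → V3 → V3) (R : ℝ → V3 → M3) (B : Set ℝ) : Prop where
  subset : B ⊆ Set.Icc 0 T
  /-- (i) `𝒢₀ = [0,T/3] ∪ [2T/3,T]`. -/
  init : q = 0 → B = Set.Ioo (T/3) (2*T/3)
  /-- (iii) `ℬ_q` is a finite union of disjoint open intervals of length `5τ_q`. -/
  intervals : ∃ F : Finset ℝ,
    (B = ⋃ c ∈ F, Set.Ioo c (c + 5 * tau T a b β α γ q)) ∧
    (F : Set ℝ).Pairwise (fun c d =>
      Disjoint (Set.Ioo c (c + 5 * tau T a b β α γ q))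
        (Set.Ioo d (d + 5 * tau T a b β α γ q)))
  /-- (vi) the Reynolds stress vanishes outside `𝓑̂_q`. -/
  suppR : ∀ t ∈ Set.Icc (0:ℝ) T, t ∉ farBad T (tau T a b β α γ q) B → ∀ x, R t x = 0
  /-- (vii) improved estimates outside `𝓑̂_q` (for `q ≥ 1`). -/
  better : ∀ N : ℕ, 1 ≤ q → ∀ t ∈ Set.Icc (0:ℝ) T, t ∉ farBad T (tau T a b β α γ q) B →
    normC (N+1) (v t) ≤ Cv N * del a b β (q-1) ^ ((1:ℝ)/2) * lam a b (q-1)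
      * ell a b β α γ (q-1) ^ (-(N:ℝ))

/-- The properties (ii), (iv), (v) linking step `q` to step `q+1`. -/
structure LinkProps (T a b β α γ : ℝ) (q : ℕ)
    (vold vnew : ℝ → V3 → V3) (Bold Bnew : Set ℝ) : Prop where
  /-- (ii) `𝒢_q ⊆ 𝒢_{q+1}`. -/
  mono : goodSet T Bold ⊆ goodSet T Bnew
  /-- (iv) `|ℬ_{q+1}| ≤ 10 (τ_{q+1}/θ_{q+1}) |ℬ_q|`. -/
  size : volume Bnew ≤ ENNReal.ofReal (10 * tau T a b β α γ (q+1) / theta a b β α (q+1))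
    * volume Bold
  /-- (v) `v_{q+1} = v_q` on `𝒢_q`. -/
  agree : ∀ t ∈ goodSet T Bold, ∀ x, vnew t x = vold t x

/-- The material derivative `(∂ₜ + v·∇)R` of a matrix-valued field. -/
def matD (v : ℝ → V3 → V3) (R : ℝ → V3 → M3) : ℝ → V3 → M3 :=
  fun t x i j => deriv (fun s => R s x i j) t + ∑ k, v t x k * pd (fun y => R t y i j) k x

/-! Mollification. -/

/-- A standard smooth compactly supported radial nonnegative mollification kernel on `ℝ³`. -/
structure StdKernel (φ : V3 → ℝ) : Prop where
  smooth : ContDiff ℝ (⊤:ℕ∞) φ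
  compSupp : HasCompactSupport φ
  radial : ∀ x y : V3, ‖x‖ = ‖y‖ → φ x = φ y
  nonneg : ∀ x, 0 ≤ φ x
  int_one : ∫ x : V3, φ x = 1

/-- Mollification at scale `ℓ`: `(f ∗ φ_ℓ)(x)` with `φ_ℓ(y) = ℓ⁻³ φ(y/ℓ)`. -/
def mollify {E : Type*} [NormedAddCommGroup E] [NormedSpace ℝ E]
    (φ : V3 → ℝ) (ℓ : ℝ) (f : V3 → E) (x : V3) : E :=
  ∫ y : V3, (ℓ ^ (-(3:ℝ)) * φ (ℓ⁻¹ • y)) • f (x - y)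

/-- A symmetric positive definite `3×3` matrix. -/
def PosDefMat (R : M3) : Prop :=
  (∀ i j, R i j = R j i) ∧ ∀ x : V3, x ≠ 0 → 0 < ∑ i, ∑ j, x i * R i j * x j

/-! ### Decomposing positive definite matrices along integer directions -/

/-- Coefficients expressing a symmetric matrix `M` through the nine rank-one matrices `v ⊗ v`,
`v = e_i, e_i + e_j, e_i - e_j`. A pair `(i, j)` encodes `e_i` if `i = j`, `e_i + e_j` if `i < j`
and `e_i - e_j` if `i > j`. The constants are such that all coefficients are positive at `M = 1`. -/
def diagCoef (k : Fin 3 × Fin 3) (M : M3) : ℝ :=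
  if k.1 = k.2 then M k.1 k.1 - 1 / 2
  else if k.1 < k.2 then 1 / 8 + M k.1 k.2 / 2
  else 1 / 8 - M k.1 k.2 / 2

/-- The integer vector `e_i`, `e_i + e_j` or `e_i - e_j` encoded by the pair `(i, j)`. -/
def diagDir (k : Fin 3 × Fin 3) : Fin 3 → ℤ :=
  if k.1 = k.2 then Pi.single k.1 1
  else if k.1 < k.2 then Pi.single k.1 1 + Pi.single k.2 1
  else Pi.single k.1 1 - Pi.single k.2 1

/-- The identity `A M Aᵀ = ∑ₖ coefₖ(M) (A vₖ) ⊗ (A vₖ)` for symmetric `M`, entrywise. -/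
lemma diag_decomp (M A : M3) (hM : ∀ i j, M i j = M j i) (a b : Fin 3) :
    ∑ i, ∑ j, A a i * M i j * A b j
      = ∑ k, diagCoef k M * (∑ i, A a i * diagDir k i) * (∑ i, A b i * diagDir k i) := by
  rw [Fintype.sum_prod_type]
  simp only [Fin.sum_univ_three, diagCoef, diagDir]
  simp
  rw [hM 1 0, hM 2 0, hM 2 1]
  ring

lemma contDiff_diagCoef (k : Fin 3 × Fin 3) : ContDiff ℝ (⊤ : ℕ∞) (diagCoef k) := by
  unfold diagCoef
  split_ifs <;> fun_prop

lemma diagCoef_one_pos (k : Fin 3 × Fin 3) :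
    0 < diagCoef k ((1 : Matrix (Fin 3) (Fin 3) ℝ) : M3) := by
  unfold diagCoef
  split_ifs with h1 h2 <;> norm_num [Matrix.one_apply, h1]

lemma exists_mul_mul_transpose_eq_one (R : Matrix (Fin 3) (Fin 3) ℝ) (hR : R.PosDef) :
    ∃ P : Matrix (Fin 3) (Fin 3) ℝ, P.det ≠ 0 ∧ P * R * P.transpose = 1 := by
  obtain ⟨B, hB⟩ : ∃ B : Matrix (Fin 3) (Fin 3) ℝ, R = B.transpose * B := by
    open scoped MatrixOrder Matrix.Norms.L2Operator in
    have := CStarAlgebra.nonneg_iff_eq_star_mul_self.mp hR.posSemidef.nonneg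
    simpa [Matrix.star_eq_conjTranspose] using this
  have hdet : B.det ≠ 0 := by
    intro h
    have := hR.det_pos
    simp [hB, h] at this
  refine ⟨B⁻¹.transpose, ?_, ?_⟩
  · rw [Matrix.det_transpose]
    simpa [Matrix.det_nonsing_inv] using hdet
  · have h1 : B * B⁻¹ = 1 := Matrix.mul_nonsing_inv _ (isUnit_iff_ne_zero.mpr hdet)
    rw [Matrix.transpose_transpose, hB, Matrix.mul_assoc, Matrix.mul_assoc, h1, Matrix.mul_one,
      ← Matrix.transpose_mul, h1, Matrix.transpose_one]

lemma PosDefMat.posDef {R : M3} (h : PosDefMat R) : (Matrix.of R).PosDef := by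
  rw [Matrix.posDef_iff_dotProduct_mulVec]
  refine ⟨?_, fun x hx => ?_⟩
  · ext i j
    simpa using h.1 j i
  · have := h.2 x hx
    simpa [dotProduct, Matrix.mulVec, Finset.mul_sum, mul_assoc] using this

lemma tendsto_int_floor_mul_div (x : ℝ) :
    Filter.Tendsto (fun D : ℕ => (⌊x * (D : ℝ)⌋ : ℝ) / D) Filter.atTop (nhds x) := by
  have h2 : Filter.Tendsto (fun D : ℕ => x - 1 / (D : ℝ)) Filter.atTop (nhds x) := by
    simpa using (tendsto_const_nhds (x := x)).sub (tendsto_one_div_atTop_nhds_zero_nat (𝕜 := ℝ))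
  refine tendsto_of_tendsto_of_tendsto_of_le_of_le' h2 tendsto_const_nhds ?_ ?_
  all_goals
    filter_upwards [Filter.eventually_gt_atTop 0] with D hD
    have hD' : (0 : ℝ) < D := by exact_mod_cast hD
  · rw [le_div_iff₀ hD', sub_mul, one_div_mul_cancel hD'.ne']
    exact (Int.sub_one_lt_floor _).le
  · rw [div_le_iff₀ hD']
    exact Int.floor_le _

/-- Every positive definite `R₀` has a decomposition into integer rank-one matrices whose
coefficients depend affinely on the matrix and are positive at `R₀`. For an invertible integer
matrix `Z` and `D > 0` with `Z / D` close to `P`, where `P R₀ Pᵀ = 1`, the matrix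
`S = (Z / D) R (Z / D)ᵀ` is close to the identity when `R = R₀`; decomposing `S` along the nine
vectors `vₖ` and undoing the conjugation produces the integer directions `adj(Z) vₖ`. -/
lemma local_decomp (R₀ : M3) (h₀ : PosDefMat R₀) :
    ∃ (d : Fin 3 × Fin 3 → Fin 3 → ℤ) (c : Fin 3 × Fin 3 → M3 → ℝ),
      (∀ k, ContDiff ℝ (⊤ : ℕ∞) (c k)) ∧ (∀ k, 0 < c k R₀) ∧
      ∀ R : M3, (∀ i j, R i j = R j i) → ∀ a b, R a b = ∑ k, c k R * (d k a * d k b) := by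
  obtain ⟨P, hPdet, hP⟩ := exists_mul_mul_transpose_eq_one _ h₀.posDef
  -- the matrix `P` may be replaced by a nearby one with rational entries `Z i j / D`
  have hlim : Filter.Tendsto (fun D : ℕ => (Matrix.of fun i j => (⌊P i j * (D : ℝ)⌋ : ℝ) / D :
      Matrix (Fin 3) (Fin 3) ℝ)) Filter.atTop (nhds P) := by
    refine tendsto_pi_nhds.2 fun i => tendsto_pi_nhds.2 fun j => ?_
    exact tendsto_int_floor_mul_div (P i j)
  have hpos : ∀ᶠ Q : Matrix (Fin 3) (Fin 3) ℝ in nhds P,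
      ∀ k, 0 < diagCoef k ((Q * Matrix.of R₀ * Q.transpose : Matrix (Fin 3) (Fin 3) ℝ) : M3) := by
    refine Filter.eventually_all.2 fun k => ?_
    have hc : Continuous fun Q : Matrix (Fin 3) (Fin 3) ℝ =>
        diagCoef k ((Q * Matrix.of R₀ * Q.transpose : Matrix (Fin 3) (Fin 3) ℝ) : M3) :=
      (contDiff_diagCoef k).continuous.comp (by fun_prop)
    refine hc.continuousAt.eventually (lt_mem_nhds ?_)
    have h1 := diagCoef_one_pos k
    rw [← hP] at h1
    exact h1
  have hdet : ∀ᶠ Q : Matrix (Fin 3) (Fin 3) ℝ in nhds P, Q.det ≠ 0 :=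
    (Continuous.matrix_det continuous_id).continuousAt.eventually_ne hPdet
  obtain ⟨D, ⟨hD1, hD2⟩, hD0⟩ := ((hlim.eventually (hpos.and hdet)).and
    (Filter.eventually_gt_atTop 0)).exists
  have hD' : (D : ℝ) ≠ 0 := by exact_mod_cast hD0.ne'
  set Q : Matrix (Fin 3) (Fin 3) ℝ := Matrix.of fun i j => (⌊P i j * (D : ℝ)⌋ : ℝ) / D with hQ
  set Z : Matrix (Fin 3) (Fin 3) ℤ := Matrix.of fun i j => ⌊P i j * (D : ℝ)⌋ with hZ
  set ZR : Matrix (Fin 3) (Fin 3) ℝ := Z.map (Int.castRingHom ℝ) with hZR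
  have hQZ : Q = (D : ℝ)⁻¹ • ZR := by
    ext i j
    simp [hQ, hZR, hZ, div_eq_inv_mul]
  have hZdet : ZR.det ≠ 0 := by
    intro h
    apply hD2
    rw [hQZ, Matrix.det_smul, h, mul_zero]
  have hadj : ∀ i j, ZR.adjugate i j = (Z.adjugate i j : ℝ) := by
    intro i j
    have : ZR.adjugate = Z.adjugate.map (Int.castRingHom ℝ) :=
      ((Int.castRingHom ℝ).map_adjugate Z).symm
    rw [this]; simp
  let S : M3 → M3 := fun R => (Q * Matrix.of R * Q.transpose : Matrix (Fin 3) (Fin 3) ℝ)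
  have hSsm : ContDiff ℝ (⊤ : ℕ∞) S := by
    have : S = fun R i j => ∑ l, (∑ m, Q i m * R m l) * Q j l := by
      ext R i j
      simp [S, Matrix.mul_apply]
    rw [this]
    fun_prop
  refine ⟨fun k => Z.adjugate.mulVec (diagDir k),
    fun k R => ((D : ℝ) / ZR.det) ^ 2 * diagCoef k (S R), fun k => ?_, fun k => ?_, ?_⟩
  · exact contDiff_const.mul ((contDiff_diagCoef k).comp hSsm)
  · exact mul_pos (by positivity) (hD1 k)
  · intro R hR a b
    have hSsymm : ∀ i j, S R i j = S R j i := by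
      intro i j
      have h1 : (Q * Matrix.of R * Q.transpose).transpose = Q * Matrix.of R * Q.transpose := by
        have : (Matrix.of R).transpose = Matrix.of R := by
          ext i j; exact hR j i
        rw [Matrix.transpose_mul, Matrix.transpose_mul, Matrix.transpose_transpose, this,
          Matrix.mul_assoc]
      exact congrFun (congrFun h1 j) i
    have key := diag_decomp (S R) (fun i j => ZR.adjugate i j) hSsymm a b
    have h1 : ZR.adjugate * (Q * Matrix.of R * Q.transpose) * ZR.adjugate.transpose
        = (ZR.det / D) ^ 2 • Matrix.of R := by
      have e1 : ZR.adjugate * Q = (ZR.det / D) • (1 : Matrix (Fin 3) (Fin 3) ℝ) := by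
        rw [hQZ, Matrix.mul_smul, Matrix.adjugate_mul, smul_smul]
        congr 1
        field_simp
      calc _ = (ZR.adjugate * Q) * Matrix.of R * (ZR.adjugate * Q).transpose := by
            rw [Matrix.transpose_mul]; simp only [Matrix.mul_assoc]
        _ = _ := by
            rw [e1]; simp [smul_smul, pow_two]
    have h2 : ∑ i, ∑ j, ZR.adjugate a i * S R i j * ZR.adjugate b j
        = (ZR.det / D) ^ 2 * R a b := by
      have := congrFun (congrFun h1 a) b
      simp only [Matrix.mul_apply (M := _ * _) (N := ZR.adjugate.transpose),
        Matrix.mul_apply (M := ZR.adjugate), Matrix.smul_apply, Matrix.of_apply,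
        Matrix.transpose_apply, smul_eq_mul, Finset.sum_mul] at this
      rw [← this, Finset.sum_comm]
    have h3 : R a b = (D / ZR.det) ^ 2 * ((ZR.det / D) ^ 2 * R a b) := by
      field_simp
    rw [h3, ← h2, key, Finset.mul_sum]
    refine Finset.sum_congr rfl fun k _ => ?_
    simp only [Matrix.mulVec, dotProduct, hadj]
    push_cast
    ring

/-- The local decompositions glued over the compact set `𝒩` with the smooth weights
`χₓ² / ∑ᵧ χᵧ²`: since these are squares of smooth functions and each local coefficient is positive
on the closed support of its bump function `χₓ`, the resulting coefficients have smooth square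
roots. A direction may occur for several indices. -/
lemma global_decomp (𝒩 : Set M3) (h𝒩c : IsCompact 𝒩) (h𝒩 : ∀ R ∈ 𝒩, PosDefMat R) :
    ∃ (ι : Type) (_ : Fintype ι) (d : ι → Fin 3 → ℤ) (γ : ι → M3 → ℝ),
      (∀ i, ∀ R ∈ 𝒩, ContDiffAt ℝ (⊤ : ℕ∞) (γ i) R) ∧
      ∀ R ∈ 𝒩, ∀ a b, R a b = ∑ i, γ i R ^ 2 * (d i a * d i b) := by
  choose d c hcs hcp hcd using fun R : 𝒩 => local_decomp R.1 (h𝒩 R.1 R.2)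
  -- a ball around each point on which all local coefficients stay positive
  have hball : ∀ R : 𝒩, ∃ r > 0, ∀ x ∈ Metric.closedBall R.1 r, ∀ k, 0 < c R k x := by
    intro R
    have h1 : ∀ᶠ x in nhds R.1, ∀ k, 0 < c R k x := Filter.eventually_all.2 fun k =>
      (hcs R k).continuous.continuousAt.eventually (lt_mem_nhds (hcp R k))
    obtain ⟨r, hr, h2⟩ := Metric.nhds_basis_closedBall.mem_iff.1 h1
    exact ⟨r, hr, h2⟩
  choose r hr hpos using hball
  let χ : ∀ R : 𝒩, ContDiffBump R.1 := fun R => ⟨r R / 2, r R, half_pos (hr R), half_lt_self (hr R)⟩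
  obtain ⟨t, ht⟩ := h𝒩c.elim_nhds_subcover' (fun x hx => Metric.ball x (r ⟨x, hx⟩))
    (fun x hx => Metric.ball_mem_nhds _ (hr ⟨x, hx⟩))
  let σ : M3 → ℝ := fun R => ∑ x ∈ t, χ x R ^ 2
  have hσ : ∀ R ∈ 𝒩, 0 < σ R := by
    intro R hR
    obtain ⟨x, hx, hRx⟩ := Set.mem_iUnion₂.1 (ht hR)
    exact Finset.sum_pos' (fun _ _ => sq_nonneg _)
      ⟨x, hx, pow_pos ((χ x).pos_of_mem_ball hRx) 2⟩
  have hσs : ContDiff ℝ (⊤ : ℕ∞) σ := ContDiff.sum fun x _ => (χ x).contDiff.pow 2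
  refine ⟨t × (Fin 3 × Fin 3), inferInstance, fun p => d p.1 p.2,
    fun p R => χ p.1 R * √(c p.1 p.2 R) / √(σ R), ?_, ?_⟩
  · rintro ⟨x, k⟩ R hR
    refine ContDiffAt.div ?_ (hσs.contDiffAt.sqrt (hσ R hR).ne') (Real.sqrt_pos.2 (hσ R hR)).ne'
    by_cases hx : R ∈ Metric.closedBall x.1.1 (r x.1)
    · exact (χ x).contDiff.contDiffAt.mul ((hcs x k).contDiffAt.sqrt (hpos x R hx k).ne')
    · -- outside the support of the bump function the product vanishes identically
      have hz : (fun R => χ x R * √(c x k R)) =ᶠ[nhds R] fun _ => (0 : ℝ) := by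
        filter_upwards [Metric.isClosed_closedBall.isOpen_compl.mem_nhds hx] with y hy
        have : χ x y = 0 := (χ x).zero_of_le_dist (by
          simpa using (not_le.1 (fun h => hy (Metric.mem_closedBall.2 h))).le)
        simp [this]
      exact contDiffAt_const.congr_of_eventuallyEq hz
  · intro R hR a b
    have hsymm := (h𝒩 R hR).1
    have h1 : ∀ x : t, ∑ k, (χ x.1 R * √(c x.1 k R) / √(σ R)) ^ 2 * ((d x.1 k a : ℝ) * d x.1 k b)
        = χ x.1 R ^ 2 / σ R * R a b := by
      intro x
      rw [hcd x.1 R hsymm a b, Finset.mul_sum]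
      refine Finset.sum_congr rfl fun k _ => ?_
      rw [div_pow, mul_pow, Real.sq_sqrt (hσ R hR).le]
      by_cases hx : R ∈ Metric.closedBall x.1.1 (r x.1)
      · rw [Real.sq_sqrt (hpos x.1 R hx k).le]
        ring
      · have : χ x.1 R = 0 := (χ x.1).zero_of_le_dist (by
          simpa using (lt_of_not_ge hx).le)
        simp [this]
    rw [Fintype.sum_prod_type]
    simp only [h1]
    rw [← Finset.sum_mul, ← Finset.sum_div, Finset.sum_coe_sort t (fun x => χ x R ^ 2)]
    change R a b = σ R / σ R * R a b
    rw [div_self (hσ R hR).ne', one_mul]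

/-! ### Integer linear forms -/

/-- The integer linear form `x ↦ n · x` on `ℝ³`. -/
def dotZ (n : Fin 3 → ℤ) (x : V3) : ℝ := ∑ a, (n a : ℝ) * x a

lemma contDiff_dotZ (n : Fin 3 → ℤ) : ContDiff ℝ (⊤ : ℕ∞) (dotZ n) := by
  unfold dotZ; fun_prop

lemma dotZ_add (n : Fin 3 → ℤ) (x y : V3) : dotZ n (x + y) = dotZ n x + dotZ n y := by
  simp [dotZ, mul_add, Finset.sum_add_distrib]

lemma dotZ_smul (n : Fin 3 → ℤ) (s : ℝ) (x : V3) : dotZ n (s • x) = s * dotZ n x := by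
  simp only [dotZ, Pi.smul_apply, smul_eq_mul, Finset.mul_sum]
  exact Finset.sum_congr rfl fun _ _ => by ring

lemma dotZ_neg (n : Fin 3 → ℤ) (x : V3) : dotZ n (-x) = -dotZ n x := by
  simp [dotZ]

lemma dotZ_intCast (n m : Fin 3 → ℤ) : dotZ n (fun a => (m a : ℝ)) = ((n ⬝ᵥ m : ℤ) : ℝ) := by
  simp [dotZ, dotProduct]

lemma exists_perp (d e : Fin 3 → ℤ) : ∃ n : Fin 3 → ℤ, n ≠ 0 ∧ n ⬝ᵥ d = 0 ∧ n ⬝ᵥ e = 0 := by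
  let M : Matrix (Fin 3) (Fin 3) ℤ := ![d, e, 0]
  have hM : M.det = 0 := Matrix.det_eq_zero_of_row_eq_zero 2 (fun j => rfl)
  obtain ⟨n, hn, h⟩ := Matrix.exists_mulVec_eq_zero_iff.2 hM
  refine ⟨n, hn, ?_, ?_⟩
  · rw [dotProduct_comm]; exact congrFun h 0
  · rw [dotProduct_comm]; exact congrFun h 1

/-- A point on which no nonzero integer linear form takes an integer value: `(t, t², t³)` with `t`
transcendental. -/
lemma exists_generic : ∃ w : V3, ∀ n : Fin 3 → ℤ, n ≠ 0 → ∀ z : ℤ, dotZ n w ≠ z := by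
  have ht : Transcendental ℤ (liouvilleNumber 2) :=
    transcendental_liouvilleNumber le_rfl
  set t : ℝ := liouvilleNumber 2
  refine ⟨![t, t ^ 2, t ^ 3], fun n hn z h => hn ?_⟩
  rw [transcendental_iff] at ht
  open Polynomial in
  have hp := ht (C (n 0) * X + C (n 1) * X ^ 2 + C (n 2) * X ^ 3 - C z) (by
    simp only [dotZ, Fin.sum_univ_three] at h
    simp at h
    simp [h])
  have hc := fun k => congrArg (fun p => Polynomial.coeff p k) hp
  funext a
  fin_cases a
  · simpa [Polynomial.coeff_X, Polynomial.coeff_C, Polynomial.coeff_X_pow, Polynomial.coeff_C_mul,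
      -Polynomial.map_intCast, -eq_intCast] using hc 1
  · simpa [Polynomial.coeff_X, Polynomial.coeff_C, Polynomial.coeff_X_pow, Polynomial.coeff_C_mul,
      -Polynomial.map_intCast, -eq_intCast] using hc 2
  · simpa [Polynomial.coeff_X, Polynomial.coeff_C, Polynomial.coeff_X_pow, Polynomial.coeff_C_mul,
      -Polynomial.map_intCast, -eq_intCast] using hc 3

/-! ### Concentrated periodic bumps -/

/-- A smooth even `1`-periodic function, positive where `cos (2πt) > κ` and zero elsewhere; as
`κ` tends to `1` its support concentrates at `ℤ`. -/
def bumpProfile (κ t : ℝ) : ℝ := smoothTransition (cos (2 * π * t) - κ)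

lemma contDiff_bumpProfile (κ : ℝ) : ContDiff ℝ (⊤ : ℕ∞) (bumpProfile κ) := by
  unfold bumpProfile
  exact Real.smoothTransition.contDiff.comp (by fun_prop)

lemma bumpProfile_neg (κ t : ℝ) : bumpProfile κ (-t) = bumpProfile κ t := by
  simp [bumpProfile]

lemma cos_two_pi_mul_add_int (t : ℝ) (z : ℤ) : cos (2 * π * (t + z)) = cos (2 * π * t) := by
  rw [mul_add, mul_comm (2 * π) (z : ℝ), cos_add_int_mul_two_pi]

lemma bumpProfile_add_int (κ t : ℝ) (z : ℤ) : bumpProfile κ (t + z) = bumpProfile κ t := by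
  simp only [bumpProfile, cos_two_pi_mul_add_int]

/-- If `s - t` stays away from `ℤ`, then `s` and `t` cannot both lie in the support of the bump: by
the addition formula, `cos (2πs), cos (2πt) > κ` forces `cos (2π(s - t)) > 2κ² - 1`. -/
lemma bumpProfile_mul_eq_zero {κ : ℝ} (hκ : 0 ≤ κ) {s t : ℝ}
    (h : cos (2 * π * (s - t)) ≤ 2 * κ ^ 2 - 1) : bumpProfile κ s * bumpProfile κ t = 0 := by
  by_contra hne
  obtain ⟨hs, ht⟩ := mul_ne_zero_iff.1 hne
  have hs' : κ < cos (2 * π * s) := by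
    by_contra hcon
    exact hs (smoothTransition.zero_of_nonpos (by linarith))
  have ht' : κ < cos (2 * π * t) := by
    by_contra hcon
    exact ht (smoothTransition.zero_of_nonpos (by linarith))
  rw [mul_sub, cos_sub] at h
  nlinarith [sq_nonneg (sin (2 * π * s) + sin (2 * π * t)), sin_sq_add_cos_sq (2 * π * s),
    sin_sq_add_cos_sq (2 * π * t), mul_pos (sub_pos.2 hs') (sub_pos.2 ht')]

lemma cos_two_pi_mul_lt_one {t : ℝ} (h : ∀ z : ℤ, t ≠ z) : cos (2 * π * t) < 1 := by
  refine lt_of_le_of_ne (cos_le_one _) fun h1 => ?_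
  obtain ⟨z, hz⟩ := (cos_eq_one_iff _).1 h1
  refine h z ?_
  have : (2 * π) ≠ 0 := by positivity
  apply mul_left_cancel₀ this
  linarith

/-! ### Integrals of periodic functions over the unit cube -/

lemma cube_eq_Icc : cube = Set.Icc (0 : V3) 1 := by
  ext x
  simp [cube, Pi.le_def, forall_and]

lemma isCompact_cube : IsCompact cube := by
  rw [cube_eq_Icc]; exact isCompact_Icc

lemma cube_ae_eq : cube =ᵐ[volume] ZSpan.fundamentalDomain (Pi.basisFun ℝ (Fin 3)) := by
  rw [ZSpan.fundamentalDomain_pi_basisFun, cube_eq_Icc]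
  exact (Measure.univ_pi_Ico_ae_eq_Icc (f := (0 : V3)) (g := 1)).symm

/-- The lattice `ℤ³` inside `ℝ³`. -/
abbrev latt : AddSubgroup V3 :=
  (Submodule.span ℤ (Set.range (Pi.basisFun ℝ (Fin 3)))).toAddSubgroup

instance : Countable latt :=
  inferInstanceAs (Countable (Submodule.span ℤ (Set.range (Pi.basisFun ℝ (Fin 3)))))

lemma isAddFundamentalDomain_cube : IsAddFundamentalDomain latt
    (ZSpan.fundamentalDomain (Pi.basisFun ℝ (Fin 3))) (volume : Measure V3) :=
  ZSpan.isAddFundamentalDomain' _ _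

lemma exists_int_of_mem_latt (g : latt) : ∃ n : Fin 3 → ℤ, (g : V3) = fun i => (n i : ℝ) := by
  have := g.2
  rw [Submodule.mem_toAddSubgroup, (Pi.basisFun ℝ (Fin 3)).mem_span_iff_repr_mem ℤ] at this
  choose n hn using this
  refine ⟨n, funext fun i => ?_⟩
  simpa using (hn i).symm

lemma Per.vadd {α : Type*} {f : V3 → α} (hf : Per f) (g : latt) (x : V3) : f (g +ᵥ x) = f x := by
  obtain ⟨n, hn⟩ := exists_int_of_mem_latt g
  rw [AddSubgroup.vadd_def, vadd_eq_add, add_comm, hn]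
  exact hf x n

/-- A periodic function that is odd about the point `c / 2` has zero average: the reflection
`x ↦ c - x` preserves volume and maps fundamental domains of `ℤ³` to fundamental domains. -/
lemma integral_eq_zero_of_odd {f : V3 → ℝ} (hf : Per f) (c : V3)
    (hodd : ∀ x, f (c - x) = -f x) : ∫ x in cube, f x = 0 := by
  rw [setIntegral_congr_set cube_ae_eq]
  set F := ZSpan.fundamentalDomain (Pi.basisFun ℝ (Fin 3)) with hF
  have hmp : MeasurePreserving (fun x : V3 => c - x) volume volume :=
    Measure.measurePreserving_sub_left volume c
  have hF' : IsAddFundamentalDomain latt ((fun x : V3 => c - x) ⁻¹' F) (volume : Measure V3) :=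
    isAddFundamentalDomain_cube.preimage_of_equiv hmp.quasiMeasurePreserving
      (e := fun g => -g) neg_involutive.bijective (by
        intro g x
        simp [AddSubgroup.vadd_def]
        abel)
  have h1 : ∫ x in (fun x : V3 => c - x) ⁻¹' F, f (c - x) = ∫ x in F, f x :=
    hmp.setIntegral_preimage_emb (MeasurableEquiv.subLeft c).measurableEmbedding f F
  have h2 := isAddFundamentalDomain_cube.setIntegral_eq hF' hf.vadd
  simp only [hodd, integral_neg] at h1
  rw [← hF] at h2
  linarith

/-- The support of `f` is open, nonempty and `ℤ³`-invariant, so it meets the fundamental domain in a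
set of positive measure. -/
lemma integral_sq_pos {f : V3 → ℝ} (hf : Per f) (hc : Continuous f) (x₀ : V3) (h₀ : f x₀ ≠ 0) :
    0 < ∫ x in cube, f x ^ 2 := by
  rw [setIntegral_pos_iff_support_of_nonneg_ae (Filter.Eventually.of_forall fun x => sq_nonneg _)
    ((hc.pow 2).continuousOn.integrableOn_compact isCompact_cube)]
  have hopen : IsOpen (Function.support fun x => f x ^ 2) := (hc.pow 2).isOpen_support
  rw [pos_iff_ne_zero]
  intro h
  refine (hopen.measure_pos volume ⟨x₀, pow_ne_zero 2 h₀⟩).ne' ?_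
  refine isAddFundamentalDomain_cube.measure_zero_of_invariant _ (fun g => ?_) ?_
  · ext x
    rw [Set.mem_vadd_set_iff_neg_vadd_mem]
    simp only [Function.mem_support, hf.vadd]
  · rw [← h]
    exact measure_congr ((Filter.EventuallyEq.refl _ _).inter cube_ae_eq.symm)

/-! ### Disjoint tubes -/

/-- The unnormalized profile of the `i`-th family of parallel tubes, one of which passes through `c i`. If every `n i j`
and `n j i` is orthogonal to a direction `d i`, it is constant along `d i`. The bump in the
direction `n i j` separates tube `i` from tube `j`, which carries a bump in the same direction; both
`n i j` and `n j i` are used since the family `n` need not be symmetric. The sine makes the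
profile odd about `c i`, hence of zero average. -/
def tube {ι : Type} [Fintype ι] (κ : ℝ) (n : ι → ι → Fin 3 → ℤ) (c : ι → V3) (i : ι) (x : V3) : ℝ :=
  sin (2 * π * dotZ (n i i) (x - c i)) *
    ∏ j, bumpProfile κ (dotZ (n i j) (x - c i)) * bumpProfile κ (dotZ (n j i) (x - c i))

section tube
variable {ι : Type} [Fintype ι] (κ : ℝ) (n : ι → ι → Fin 3 → ℤ) (c : ι → V3) (i : ι)

lemma contDiff_tube : ContDiff ℝ (⊤ : ℕ∞) (tube κ n c i) := by
  have h : ∀ m : Fin 3 → ℤ, ContDiff ℝ (⊤ : ℕ∞) fun x : V3 => dotZ m (x - c i) := fun m =>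
    (contDiff_dotZ m).comp (contDiff_id.sub contDiff_const)
  unfold tube
  refine (contDiff_sin.comp (contDiff_const.mul (h _))).mul (contDiff_prod fun j _ => ?_)
  exact ((contDiff_bumpProfile κ).comp (h _)).mul ((contDiff_bumpProfile κ).comp (h _))

lemma tube_per : Per (tube κ n c i) := by
  intro x m
  have h : ∀ k : Fin 3 → ℤ, dotZ k (x + (fun a => (m a : ℝ)) - c i)
      = dotZ k (x - c i) + ((k ⬝ᵥ m : ℤ) : ℝ) := by
    intro k
    rw [← dotZ_intCast, ← dotZ_add]
    congr 1
    abel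
  simp only [tube, h, bumpProfile_add_int]
  rw [mul_add, mul_comm (2 * π) (((n i i) ⬝ᵥ m : ℤ) : ℝ), sin_add_int_mul_two_pi]

lemma tube_odd (x : V3) : tube κ n c i ((2 : ℝ) • c i - x) = -tube κ n c i x := by
  have h : (2 : ℝ) • c i - x - c i = -(x - c i) := by
    rw [two_smul]; abel
  simp only [tube, h, dotZ_neg, bumpProfile_neg, mul_neg, sin_neg, neg_mul]

lemma tube_invariant (d : Fin 3 → ℤ) (hd : ∀ j, n i j ⬝ᵥ d = 0 ∧ n j i ⬝ᵥ d = 0)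
    (s : ℝ) (x : V3) : tube κ n c i (x + s • fun a => (d a : ℝ)) = tube κ n c i x := by
  have h : ∀ k : Fin 3 → ℤ, k ⬝ᵥ d = 0 →
      dotZ k (x + (s • fun a => (d a : ℝ)) - c i) = dotZ k (x - c i) := by
    intro k hk
    have : x + (s • fun a => (d a : ℝ)) - c i = (x - c i) + s • fun a => (d a : ℝ) := by abel
    rw [this, dotZ_add, dotZ_smul, dotZ_intCast, hk]
    simp
  simp only [tube, h _ (hd _).1, h _ (hd _).2]

lemma exists_tube_ne_zero (hκ : κ < 1) (hn : n i i ≠ 0) : ∃ x, tube κ n c i x ≠ 0 := by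
  -- near `c i`, in the direction of `n i i`, every factor is nonzero
  set v : V3 := fun a => (n i i a : ℝ) with hv
  have hq : 0 < dotZ (n i i) v := by
    obtain ⟨a, ha⟩ := Function.ne_iff.1 hn
    refine Finset.sum_pos' (fun b _ => mul_self_nonneg _) ⟨a, Finset.mem_univ _, ?_⟩
    have : (n i i a : ℝ) ≠ 0 := by exact_mod_cast ha
    exact mul_self_pos.2 this
  have hbump : ∀ m : Fin 3 → ℤ, ∀ᶠ s : ℝ in nhds 0, bumpProfile κ (s * dotZ m v) ≠ 0 := by
    intro m
    have hc : Continuous fun s : ℝ => bumpProfile κ (s * dotZ m v) :=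
      (contDiff_bumpProfile κ).continuous.comp (by fun_prop)
    refine hc.continuousAt.eventually_ne ?_
    simp only [zero_mul, bumpProfile, mul_zero, cos_zero]
    exact (smoothTransition.pos_of_pos (by linarith)).ne'
  have hall : ∀ᶠ s : ℝ in nhds 0, ∀ j, bumpProfile κ (s * dotZ (n i j) v) ≠ 0 ∧
      bumpProfile κ (s * dotZ (n j i) v) ≠ 0 :=
    Filter.eventually_all.2 fun j => (hbump _).and (hbump _)
  have hsmall : ∀ᶠ s : ℝ in nhds 0, 2 * π * (s * dotZ (n i i) v) < π := by
    have hc : Continuous fun s : ℝ => 2 * π * (s * dotZ (n i i) v) := by fun_prop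
    refine hc.continuousAt.eventually (gt_mem_nhds ?_)
    simpa using pi_pos
  obtain ⟨s, ⟨hs1, hs2⟩, hs3⟩ := (((hall.and hsmall).filter_mono nhdsWithin_le_nhds).and
    (self_mem_nhdsWithin (s := Set.Ioi (0 : ℝ)))).exists
  have hs3 : 0 < s := hs3
  refine ⟨c i + s • v, ?_⟩
  simp only [tube, add_sub_cancel_left, dotZ_smul]
  refine mul_ne_zero (sin_pos_of_pos_of_lt_pi (by positivity) hs2).ne' ?_
  exact Finset.prod_ne_zero_iff.2 fun j _ => mul_ne_zero (hs1 j).1 (hs1 j).2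

lemma tube_mul_tube (hκ : 0 ≤ κ) (j : ι)
    (h : cos (2 * π * dotZ (n i j) (c j - c i)) ≤ 2 * κ ^ 2 - 1) (x : V3) :
    tube κ n c i x * tube κ n c j x = 0 := by
  have h0 : bumpProfile κ (dotZ (n i j) (x - c i)) * bumpProfile κ (dotZ (n i j) (x - c j)) = 0 := by
    refine bumpProfile_mul_eq_zero hκ ?_
    have : dotZ (n i j) (x - c i) - dotZ (n i j) (x - c j) = dotZ (n i j) (c j - c i) := by
      rw [sub_eq_add_neg, ← dotZ_neg, ← dotZ_add]
      congr 1
      abel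
    rwa [this]
  rcases mul_eq_zero.1 h0 with h0 | h0
  · have : tube κ n c i x = 0 := by
      unfold tube
      rw [Finset.prod_eq_zero (Finset.mem_univ j) (by rw [h0, zero_mul]), mul_zero]
    rw [this, zero_mul]
  · have : tube κ n c j x = 0 := by
      unfold tube
      rw [Finset.prod_eq_zero (Finset.mem_univ i) (by rw [h0, mul_zero]), mul_zero]
    rw [this, mul_zero]

end tube

/-- Normalized profiles with pairwise disjoint supports. Taking `n i j` orthogonal to both `d i` and
`d j`, and as centres distinct integer multiples of a generic point, `n i j · (c j - c i)` is never
an integer for `i ≠ j`, so all tubes are disjoint once `κ` is close to `1`. -/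
lemma exists_profiles {ι : Type} [Fintype ι] (d : ι → Fin 3 → ℤ) :
    ∃ ψ : ι → V3 → ℝ, (∀ i, ContDiff ℝ (⊤ : ℕ∞) (ψ i)) ∧ (∀ i, Per (ψ i)) ∧
      (∀ i (s : ℝ) x, ψ i (x + s • fun a => (d i a : ℝ)) = ψ i x) ∧
      (∀ i, ∫ x in cube, ψ i x = 0) ∧ (∀ i, ∫ x in cube, ψ i x ^ 2 = 1) ∧
      ∀ i j, i ≠ j → ∀ x, ψ i x * ψ j x = 0 := by
  choose n hn0 hn1 hn2 using fun i j => exists_perp (d i) (d j)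
  obtain ⟨w, hw⟩ := exists_generic
  let e := Fintype.equivFin ι
  let c : ι → V3 := fun i => ((e i : ℕ) : ℝ) • w
  have hc : ∀ i j, i ≠ j → cos (2 * π * dotZ (n i j) (c j - c i)) < 1 := by
    intro i j hij
    refine cos_two_pi_mul_lt_one fun z => ?_
    have h1 : dotZ (n i j) (c j - c i) = dotZ ((((e j : ℕ) : ℤ) - ((e i : ℕ) : ℤ)) • n i j) w := by
      simp only [c, dotZ, ← sub_smul, Pi.smul_apply, smul_eq_mul]
      push_cast
      exact Finset.sum_congr rfl fun _ _ => by ring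
    rw [h1]
    refine hw _ (smul_ne_zero ?_ (hn0 i j)) z
    rw [sub_ne_zero]
    intro h
    exact hij (e.injective (Fin.ext (by exact_mod_cast h.symm)))
  -- concentrating the profiles enough makes all the supports disjoint
  have hκ : ∀ᶠ κ : ℝ in nhdsWithin 1 (Set.Iio 1), ∀ i j, i ≠ j →
      cos (2 * π * dotZ (n i j) (c j - c i)) ≤ 2 * κ ^ 2 - 1 := by
    refine Filter.Eventually.filter_mono nhdsWithin_le_nhds ?_
    refine Filter.eventually_all.2 fun i => Filter.eventually_all.2 fun j => ?_
    by_cases hij : i = j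
    · simp [hij]
    have hcont : Continuous fun κ : ℝ => 2 * κ ^ 2 - 1 := by fun_prop
    have := hcont.continuousAt.eventually (lt_mem_nhds (a := cos (2 * π * dotZ (n i j) (c j - c i)))
      (b := 2 * (1 : ℝ) ^ 2 - 1) (by norm_num; exact hc i j hij))
    filter_upwards [this] with κ hκ _ using hκ.le
  obtain ⟨κ, ⟨hκ1, hκ2⟩, hκ0⟩ := ((hκ.and self_mem_nhdsWithin).and
    (Filter.Eventually.filter_mono nhdsWithin_le_nhds (lt_mem_nhds (zero_lt_one' ℝ)))).exists
  have hκ2 : κ < 1 := hκ2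
  have hI : ∀ i, 0 < ∫ x in cube, tube κ n c i x ^ 2 := by
    intro i
    obtain ⟨x, hx⟩ := exists_tube_ne_zero κ n c i hκ2 (hn0 i i)
    exact integral_sq_pos (tube_per κ n c i) (contDiff_tube κ n c i).continuous x hx
  set I : ι → ℝ := fun i => ∫ x in cube, tube κ n c i x ^ 2 with hIdef
  refine ⟨fun i x => (√(I i))⁻¹ * tube κ n c i x, fun i => contDiff_const.mul (contDiff_tube ..),
    fun i x m => ?_, fun i s x => ?_, fun i => ?_, fun i => ?_, fun i j hij x => ?_⟩
  · simp only [tube_per κ n c i x m]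
  · simp only [tube_invariant κ n c i (d i) (fun j => ⟨hn1 i j, hn2 j i⟩)]
  · rw [integral_const_mul, integral_eq_zero_of_odd (tube_per κ n c i) _ (tube_odd κ n c i),
      mul_zero]
  · simp only [mul_pow]
    rw [integral_const_mul, inv_pow, Real.sq_sqrt (hI i).le]
    exact inv_mul_cancel₀ (hI i).ne'
  · have := tube_mul_tube κ n c i hκ0.le j (hκ1 i j hij) x
    linear_combination (√(I i))⁻¹ * (√(I j))⁻¹ * this

/-! ### Divergence of fields carried by tubes -/

lemma sum_pd_eq_zero {f : V3 → ℝ} {v : V3} (hf : Differentiable ℝ f)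
    (h : ∀ (s : ℝ) x, f (x + s • v) = f x) (x : V3) : ∑ j, v j * pd f j x = 0 := by
  have h1 : ∑ j, v j * pd f j x = fderiv ℝ f x v := by
    conv_rhs => rw [pi_eq_sum_univ' v]
    simp only [map_sum, map_smul, smul_eq_mul, pd]
  have h2 : HasLineDerivAt ℝ f (fderiv ℝ f x v) x v := (hf x).hasFDerivAt.hasLineDerivAt v
  have h3 : HasLineDerivAt ℝ f 0 x v := by
    unfold HasLineDerivAt
    simp only [h]
    exact hasDerivAt_const 0 (f x)
  rw [h1]
  exact h2.unique h3

lemma pd_sum {ι : Type} [Fintype ι] {f : ι → V3 → ℝ} (hf : ∀ i, Differentiable ℝ (f i))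
    (a : ι → ℝ) (j : Fin 3) (x : V3) :
    pd (fun y => ∑ i, a i * f i y) j x = ∑ i, a i * pd (f i) j x := by
  unfold pd
  rw [fderiv_fun_sum fun i _ => ((hf i).const_mul (a i)) x]
  simp only [_root_.sum_apply]
  refine Finset.sum_congr rfl fun i _ => ?_
  rw [fderiv_const_mul (hf i x)]
  simp

/-- A superposition `∑ᵢ aᵢ fᵢ vᵢ` in which each `fᵢ` is constant along `vᵢ` is divergence-free. -/
lemma sum_pd_sum_eq_zero {ι : Type} [Fintype ι] {f : ι → V3 → ℝ} (hf : ∀ i, Differentiable ℝ (f i))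
    (v : ι → V3) (h : ∀ i (s : ℝ) x, f i (x + s • v i) = f i x) (a : ι → ℝ) (x : V3) :
    ∑ j, pd (fun y => ∑ i, (a i * v i j) * f i y) j x = 0 := by
  simp only [pd_sum hf]
  rw [Finset.sum_comm]
  refine Finset.sum_eq_zero fun i _ => ?_
  simp only [mul_assoc, ← Finset.mul_sum]
  rw [sum_pd_eq_zero (hf i) (h i), mul_zero]

/-- **Lemma 4.1 (Mikado flows).** For any compact set `𝒩` of symmetric positive
definite `3×3` matrices there is a smooth vector field `W : 𝒩 × 𝕋³ → ℝ³` such that,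
for every `R ∈ 𝒩`, `W(R,·)` is divergence-free, `div_ξ(W ⊗ W) = 0`, `W(R,·)` has zero
average on `𝕋³`, and the average of `W(R,·) ⊗ W(R,·)` is `R`. -/
theorem mikado_flows (𝒩 : Set M3) (h𝒩c : IsCompact 𝒩)
    (h𝒩 : ∀ R ∈ 𝒩, PosDefMat R) :
    ∃ W : M3 → V3 → V3,
      ContDiffOn ℝ (⊤:ℕ∞) (fun p : M3 × V3 => W p.1 p.2) (𝒩 ×ˢ Set.univ) ∧
      (∀ R ∈ 𝒩, Per (W R)) ∧
      (∀ R ∈ 𝒩, ∀ ξ : V3, divg (W R) ξ = 0) ∧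
      (∀ R ∈ 𝒩, ∀ (ξ : V3) (k : Fin 3),
        ∑ j, pd (fun y => W R y j * W R y k) j ξ = 0) ∧
      (∀ R ∈ 𝒩, (∫ ξ in cube, W R ξ) = 0) ∧
      (∀ R ∈ 𝒩, ∀ i j : Fin 3, (∫ ξ in cube, W R ξ i * W R ξ j) = R i j) := by
  obtain ⟨ι, _, d, γ, hγ, hR⟩ := global_decomp 𝒩 h𝒩c h𝒩
  obtain ⟨ψ, hψs, hψp, hψd, hψ0, hψ1, hψψ⟩ := exists_profiles d
  have hψdiff : ∀ i, Differentiable ℝ (ψ i) := fun i => (hψs i).differentiable (by simp)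
  have hIntOn : ∀ {f : V3 → ℝ}, Continuous f → IntegrableOn f cube := fun hf =>
    hf.continuousOn.integrableOn_compact isCompact_cube
  -- the cross terms of `W ⊗ W` vanish because the supports are disjoint
  have hWW : ∀ R x j k, (∑ i, γ i R * d i j * ψ i x) * (∑ i, γ i R * d i k * ψ i x)
      = ∑ i, (γ i R ^ 2 * d i k * d i j) * ψ i x ^ 2 := by
    intro R x j k
    rw [Finset.sum_mul_sum]
    refine Finset.sum_congr rfl fun i _ => ?_
    rw [Finset.sum_eq_single i]
    · ring
    · intro l _ hl
      linear_combination γ i R * d i j * γ l R * d l k * hψψ i l (Ne.symm hl) x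
    · simp
  refine ⟨fun R x j => ∑ i, γ i R * d i j * ψ i x, ?_, ?_, ?_, ?_, ?_, ?_⟩
  · rintro ⟨R, x⟩ ⟨hRN, -⟩
    refine ContDiffAt.contDiffWithinAt ?_
    refine contDiffAt_pi.2 fun j => ContDiffAt.sum fun i _ => ?_
    exact (((hγ i R hRN).comp (R, x) contDiffAt_fst).mul contDiffAt_const).mul
      ((hψs i).contDiffAt.comp (R, x) contDiffAt_snd)
  · intro R _ x m
    funext j
    simp only [hψp _ x m]
  · intro R _ x
    exact sum_pd_sum_eq_zero hψdiff (fun i a => (d i a : ℝ)) hψd (fun i => γ i R) x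
  · intro R _ x k
    simp only [hWW]
    exact sum_pd_sum_eq_zero (f := fun i x => ψ i x ^ 2) (fun i => (hψdiff i).pow 2)
      (fun i a => (d i a : ℝ)) (fun i s x => by simp only [hψd]) (fun i => γ i R ^ 2 * d i k) x
  · intro R _
    have hi : ∀ j, IntegrableOn (fun x => ∑ i, γ i R * d i j * ψ i x) cube := fun j =>
      hIntOn (continuous_finsetSum _ fun i _ => continuous_const.mul (hψs i).continuous)
    funext j
    rw [eval_integral hi, integral_finsetSum _ fun i _ => (hIntOn (hψs i).continuous).const_mul _]
    simp [integral_const_mul, hψ0]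
  · intro R hRN a b
    simp only [hWW]
    rw [integral_finsetSum _ fun i _ =>
      (hIntOn (f := fun x => ψ i x ^ 2) ((hψs i).continuous.pow 2)).const_mul _, hR R hRN a b]
    refine Finset.sum_congr rfl fun i _ => ?_
    rw [integral_const_mul, hψ1]
    ring
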